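/- Let n ≥ 1. For every integer j ≥ 0, the number of cyclically alternating permutations σ of {1,…,2n} with cswap(σ) = j equals the number of linear extensions π of the naturally labeled crown poset C̃_{2n} with des(π) = j. Equivalently, Σ_{σ ∈ CA_{2n}} t^{cswap(σ)} = Σ_{π ∈ JH(C̃_{2n})} t^{des(π)} as polynomials. -/

import Mathlib

/-- The cyclic successor of an index/value in `Fin m` (i.e. `i + 1 mod m`). -/
def cyclicSucc {m : ℕ} (i : Fin m) : Fin m := ⟨((i : ℕ) + 1) % m, Nat.mod_lt _ i.pos⟩

/-- `σ` (a permutation of `{0,…,2n−1}`, standing for `{1,…,2n}`) is cyclically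
alternating: `σ_1 < σ_2 > σ_3 < ⋯ > σ_{2n−1} < σ_{2n} > σ_1` (0-indexed, with
indices taken cyclically). -/
def IsCAP {n : ℕ} (σ : Equiv.Perm (Fin (2 * n))) : Prop :=
  ∀ i : Fin (2 * n),
    (Even (i : ℕ) → σ i < σ (cyclicSucc i)) ∧ (Odd (i : ℕ) → σ (cyclicSucc i) < σ i)

/-- The cyclic swap set of `σ`: values `k` (with `k+1` also a value, i.e.
`k ∈ {1,…,2n−1}` in 1-indexed terms) such that `σ⁻¹(k) > σ⁻¹(k+1) + 1`. -/
def CSwapSet {n : ℕ} (σ : Equiv.Perm (Fin (2 * n))) : Set (Fin (2 * n)) :=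
  {k | (k : ℕ) + 1 < 2 * n ∧
    ((σ⁻¹ (cyclicSucc k) : Fin (2 * n)) : ℕ) + 1 < ((σ⁻¹ k : Fin (2 * n)) : ℕ)}

/-- The cyclic swap statistic `cswap(σ)`. -/
noncomputable def cswap {n : ℕ} (σ : Equiv.Perm (Fin (2 * n))) : ℕ := (CSwapSet σ).ncard

/-- Cover relations of the naturally labeled crown poset `C̃_{2n}` on `{1,…,2n}`:
`i ≺ n+i` for `1 ≤ i ≤ n`, `i+1 ≺ n+i` for `1 ≤ i ≤ n−1`, and `1 ≺ 2n`. -/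
def natCrownCover (n x y : ℕ) : Prop :=
  (∃ i, 1 ≤ i ∧ i ≤ n ∧ x = i ∧ y = n + i) ∨
  (∃ i, 1 ≤ i ∧ i ≤ n - 1 ∧ x = i + 1 ∧ y = n + i) ∨
  (x = 1 ∧ y = 2 * n)

/-- The order relation of the naturally labeled crown poset `C̃_{2n}`. -/
def natCrownLe (n x y : ℕ) : Prop := x = y ∨ natCrownCover n x y

/-- `π` is a linear extension of the naturally labeled crown poset `C̃_{2n}`
(the permutation of `{0,…,2n−1}` stands for the word `π_1 ⋯ π_{2n}` on
`{1,…,2n}` via `+1`): `π_p ⪯ π_q` implies `p ≤ q`. -/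
def IsLinExtCrown {n : ℕ} (π : Equiv.Perm (Fin (2 * n))) : Prop :=
  ∀ p q : Fin (2 * n), natCrownLe n ((π p : ℕ) + 1) ((π q : ℕ) + 1) → p ≤ q

/-- The descent number of `π`. -/
noncomputable def des {n : ℕ} (π : Equiv.Perm (Fin (2 * n))) : ℕ :=
  Set.ncard {i : Fin (2 * n) | (i : ℕ) + 1 < 2 * n ∧ π (cyclicSucc i) < π i}

/-- strict cover relation on `Fin (2n)` -/
def crR (n : ℕ) (x y : Fin (2 * n)) : Prop := natCrownCover n ((x : ℕ) + 1) ((y : ℕ) + 1)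

lemma crR_lt {n : ℕ} {x y : Fin (2 * n)} (h : crR n x y) : x < y := by
  rw [Fin.lt_def]
  have := x.2
  have := y.2
  rcases h with ⟨i, h1, h2, h3, h4⟩ | ⟨i, h1, h2, h3, h4⟩ | ⟨h3, h4⟩ <;> omega

lemma linExt_iff {n : ℕ} (π : Equiv.Perm (Fin (2 * n))) :
    IsLinExtCrown π ↔ ∀ x y, crR n x y → π⁻¹ x < π⁻¹ y := by
  constructor
  · intro h x y hxy
    have h1 := h (π⁻¹ x) (π⁻¹ y) (by
      right
      simpa [crR] using hxy)
    refine lt_of_le_of_ne h1 ?_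
    intro he
    have := π⁻¹.injective he
    have := crR_lt hxy
    simp_all
  · intro h p q hpq
    rcases hpq with he | hc
    · have : π p = π q := Fin.ext (by omega)
      exact le_of_eq (π.injective this)
    · have := h (π p) (π q) hc
      simpa using this.le

lemma cs_val {n : ℕ} (i : Fin (2 * n)) (h : (i : ℕ) + 1 < 2 * n) :
    ((cyclicSucc i : Fin (2 * n)) : ℕ) = i + 1 := by
  simp [cyclicSucc, Nat.mod_eq_of_lt h]

lemma swap_lt_iff {m : ℕ} {a b p q : Fin m} (hab : (b : ℕ) = a + 1)
    (h1 : ¬ (p = a ∧ q = b)) (h2 : ¬ (p = b ∧ q = a)) :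
    Equiv.swap a b p < Equiv.swap a b q ↔ p < q := by
  simp only [Equiv.swap_apply_def]
  split_ifs <;> simp only [Fin.lt_def, Fin.ext_iff] at * <;> omega

lemma des_nonadj {n : ℕ} {a b : Fin (2 * n)} (hab : (b : ℕ) = a + 1)
    (τ : Equiv.Perm (Fin (2 * n)))
    (h1 : ((τ⁻¹ a : Fin (2 * n)) : ℕ) + 1 ≠ ((τ⁻¹ b : Fin (2 * n)) : ℕ))
    (h2 : ((τ⁻¹ b : Fin (2 * n)) : ℕ) + 1 ≠ ((τ⁻¹ a : Fin (2 * n)) : ℕ)) :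
    des (Equiv.swap a b * τ) = des τ := by
  unfold des
  congr 1
  ext i
  simp only [Set.mem_ofPred_eq, Equiv.Perm.mul_apply]
  refine and_congr_right fun hi => ?_
  have hc := cs_val i hi
  apply swap_lt_iff hab
  · rintro ⟨rfl, rfl⟩
    simp at h1 h2
    omega
  · rintro ⟨rfl, rfl⟩
    simp at h1 h2
    omega

/-- adjacency of `x` and `y` in the word `π` -/
def adjW {n : ℕ} (x y : Fin (2 * n)) (π : Equiv.Perm (Fin (2 * n))) : Prop :=
  ((π⁻¹ x : Fin (2 * n)) : ℕ) + 1 = ((π⁻¹ y : Fin (2 * n)) : ℕ) ∨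
  ((π⁻¹ y : Fin (2 * n)) : ℕ) + 1 = ((π⁻¹ x : Fin (2 * n)) : ℕ)

lemma adjW_swap {n : ℕ} (x y : Fin (2 * n)) (π : Equiv.Perm (Fin (2 * n))) :
    adjW x y (Equiv.swap x y * π) ↔ adjW x y π := by
  simp [adjW, mul_inv_rev, Equiv.Perm.mul_apply, or_comm]

open Classical in
/-- the toggle -/
noncomputable def tog {n : ℕ} (x y : Fin (2 * n)) (π : Equiv.Perm (Fin (2 * n))) :
    Equiv.Perm (Fin (2 * n)) := if adjW x y π then Equiv.swap x y * π else π

lemma tog_tog {n : ℕ} (x y : Fin (2 * n)) (π : Equiv.Perm (Fin (2 * n))) :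
    tog x y (tog x y π) = π := by
  unfold tog
  by_cases h : adjW x y π
  · rw [if_pos h, if_pos ((adjW_swap x y π).2 h), ← mul_assoc]
    simp
  · rw [if_neg h, if_neg h]

lemma tog_lin {n : ℕ} (x y : Fin (2 * n)) (hxy : ¬ crR n x y) (hyx : ¬ crR n y x)
    (π : Equiv.Perm (Fin (2 * n))) (h : IsLinExtCrown π) : IsLinExtCrown (tog x y π) := by
  unfold tog
  split_ifs with ha
  · rw [linExt_iff] at *
    intro c d hcd
    have hl := h c d hcd
    have hne : c ≠ d := (crR_lt hcd).ne
    have inj : ∀ u v : Fin (2 * n), u ≠ v →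
        ((π⁻¹ u : Fin (2 * n)) : ℕ) ≠ ((π⁻¹ v : Fin (2 * n)) : ℕ) := fun u v huv he =>
      huv (π⁻¹.injective (Fin.ext he))
    simp only [mul_inv_rev, Equiv.Perm.mul_apply, Equiv.swap_inv]
    have i1 := inj c x
    have i2 := inj c y
    have i3 := inj d x
    have i4 := inj d y
    unfold adjW at ha
    rw [Fin.lt_def] at *
    simp only [Equiv.swap_apply_def]
    split_ifs <;> subst_vars <;> first | contradiction | grind
  · exact h

lemma step {n : ℕ} {a b : Fin (2 * n)} (hab : (b : ℕ) = a + 1)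
    (ω : Equiv.Perm (Fin (2 * n))) (h1 : ¬ crR n (ω⁻¹ a) (ω⁻¹ b))
    (h2 : ¬ crR n (ω⁻¹ b) (ω⁻¹ a)) (j : ℕ) :
    {π : Equiv.Perm (Fin (2 * n)) | IsLinExtCrown π ∧ des (Equiv.swap a b * ω * π) = j}.ncard
    = {π : Equiv.Perm (Fin (2 * n)) | IsLinExtCrown π ∧ des (ω * π) = j}.ncard := by
  have key : ∀ π : Equiv.Perm (Fin (2 * n)),
      des (Equiv.swap a b * ω * π) = des (ω * tog (ω⁻¹ a) (ω⁻¹ b) π) := by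
    intro π
    unfold tog
    split_ifs with ha
    · congr 1
      rw [← mul_assoc]
      congr 1
      rw [Equiv.mul_swap_eq_swap_mul]
      simp
    · rw [mul_assoc]
      unfold adjW at ha
      push Not at ha
      apply des_nonadj hab
      · simpa [mul_inv_rev, Equiv.Perm.mul_apply] using ha.1
      · simpa [mul_inv_rev, Equiv.Perm.mul_apply] using ha.2
  apply Set.ncard_congr (fun π _ => tog (ω⁻¹ a) (ω⁻¹ b) π)
  · rintro π ⟨hl, hd⟩
    exact ⟨tog_lin _ _ h1 h2 π hl, by rw [← key]; exact hd⟩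
  · intro π π' _ _ he
    have := congrArg (tog (ω⁻¹ a) (ω⁻¹ b)) he
    simpa [tog_tog] using this
  · rintro π ⟨hl, hd⟩
    refine ⟨tog (ω⁻¹ a) (ω⁻¹ b) π, ⟨tog_lin _ _ h1 h2 π hl, ?_⟩, tog_tog _ _ _⟩
    rw [key, tog_tog]
    exact hd

lemma exists_desc {m : ℕ} (τ : Equiv.Perm (Fin m)) (h : τ ≠ 1) :
    ∃ a b : Fin m, (b : ℕ) = a + 1 ∧ τ b < τ a := by
  by_contra! hc
  apply h
  have hs : StrictMono τ := by
    cases m with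
    | zero => intro a; exact a.elim0
    | succ m =>
      rw [Fin.strictMono_iff_lt_succ]
      intro i
      refine lt_of_le_of_ne (hc _ _ (by simp)) ?_
      intro he
      have := τ.injective he
      simp [Fin.ext_iff] at this
  have hs' : StrictMono τ.symm := by
    intro a b hab
    by_contra! hle
    have := hs.monotone hle
    simp at this
    exact absurd hab (not_lt.2 this)
  ext i
  have e1 : i ≤ τ i := hs.le_apply
  have e2 : τ i ≤ τ.symm (τ i) := hs'.le_apply
  simp at e2
  have := le_antisymm e2 e1
  simp [this]

lemma natural_indep {n : ℕ} (j : ℕ) (N : ℕ) : ∀ (ω : Equiv.Perm (Fin (2 * n)))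
    (_ : ∀ x y, crR n x y → ω x < ω y)
    (_ : (∑ i : Fin (2 * n), ((2 * n : ℤ) - (ω⁻¹ i : Fin (2 * n))) * (i : ℕ)) ≤ N),
    {π : Equiv.Perm (Fin (2 * n)) | IsLinExtCrown π ∧ des (ω * π) = j}.ncard
    = {π : Equiv.Perm (Fin (2 * n)) | IsLinExtCrown π ∧ des π = j}.ncard := by
  induction N using Nat.strong_induction_on with
  | _ N ih =>
  intro ω hω hN
  by_cases h1 : ω = 1
  · subst h1; simp
  obtain ⟨a, b, hab, hlt⟩ := exists_desc ω⁻¹ (by simpa using h1)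
  have n1 : ¬ crR n (ω⁻¹ a) (ω⁻¹ b) := fun h => absurd (crR_lt h) (not_lt.2 hlt.le)
  have n2 : ¬ crR n (ω⁻¹ b) (ω⁻¹ a) := fun h => by
    have := hω _ _ h
    simp at this
    rw [Fin.lt_def] at this
    omega
  rw [← step hab ω n1 n2 j]
  have hne : a ≠ b := fun h => by subst h; omega
  have hsum : (∑ i : Fin (2 * n), ((2 * n : ℤ) -
      ((Equiv.swap a b * ω)⁻¹ i : Fin (2 * n))) * (i : ℕ)) <
      (∑ i : Fin (2 * n), ((2 * n : ℤ) - (ω⁻¹ i : Fin (2 * n))) * (i : ℕ)) := by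
    rw [← sub_neg, ← Finset.sum_sub_distrib,
      ← Finset.sum_subset (Finset.subset_univ {a, b}), Finset.sum_pair hne]
    · simp only [mul_inv_rev, Equiv.Perm.mul_apply, Equiv.swap_inv, Equiv.swap_apply_left,
        Equiv.swap_apply_right, hab]
      rw [Fin.lt_def] at hlt
      push_cast
      nlinarith
    · intro i _ hi
      simp only [Finset.mem_insert, Finset.mem_singleton, not_or] at hi
      simp [mul_inv_rev, Equiv.Perm.mul_apply, Equiv.swap_apply_of_ne_of_ne hi.1 hi.2]
  have hnn : 0 ≤ (∑ i : Fin (2 * n), ((2 * n : ℤ) -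
      ((Equiv.swap a b * ω)⁻¹ i : Fin (2 * n))) * (i : ℕ)) := by
    apply Finset.sum_nonneg
    intro i _
    have := ((Equiv.swap a b * ω)⁻¹ i).2
    apply mul_nonneg
    · omega
    · positivity
  refine ih (N - 1) (by omega) _ ?_ (by omega)
  intro x y hxy
  have hl := hω x y hxy
  rw [Equiv.Perm.mul_apply, Equiv.Perm.mul_apply]
  refine (swap_lt_iff hab ?_ ?_).2 hl
  · rintro ⟨rfl, rfl⟩
    simp at n1
    exact n1 hxy
  · rintro ⟨rfl, rfl⟩
    simp at n2
    exact n2 hxy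

/-- from crown labels to cyclic positions -/
def phiF (n : ℕ) (x : Fin (2 * n)) : Fin (2 * n) :=
  ⟨if (x : ℕ) < n then 2 * x else 2 * (x - n) + 1, by have := x.2; split_ifs <;> omega⟩

lemma phiF_inj (n : ℕ) : Function.Injective (phiF n) := by
  intro x y h
  have := x.2
  have := y.2
  simp only [phiF, Fin.mk.injEq] at h
  apply Fin.ext
  split_ifs at h <;> omega

/-- the bijection -/
noncomputable def phi (n : ℕ) : Equiv.Perm (Fin (2 * n)) :=
  Equiv.ofBijective (phiF n) (Finite.injective_iff_bijective.1 (phiF_inj n))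

/-- natural relabelling -/
def rhoF (n : ℕ) (x : Fin (2 * n)) : Fin (2 * n) :=
  ⟨if (x : ℕ) % 2 = 0 then x - 1 else if (x : ℕ) + 1 = 2 * n then x else x + 1, by
    have := x.2; split_ifs <;> omega⟩

lemma rhoF_inj (n : ℕ) : Function.Injective (rhoF n) := by
  intro x y h
  have := x.2
  have := y.2
  simp only [rhoF, Fin.mk.injEq] at h
  apply Fin.ext
  split_ifs at h <;> omega

/-- the bijection -/
noncomputable def rho (n : ℕ) : Equiv.Perm (Fin (2 * n)) :=
  Equiv.ofBijective (rhoF n) (Finite.injective_iff_bijective.1 (rhoF_inj n))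

lemma phi_val (n : ℕ) (x : Fin (2 * n)) :
    ((phi n x : Fin (2 * n)) : ℕ) = if (x : ℕ) < n then 2 * (x : ℕ) else 2 * (x - n) + 1 := rfl

lemma rho_val (n : ℕ) (x : Fin (2 * n)) :
    ((rho n x : Fin (2 * n)) : ℕ) = if (x : ℕ) % 2 = 0 then (x : ℕ) - 1
      else if (x : ℕ) + 1 = 2 * n then (x : ℕ) else x + 1 := rfl

/-- relation on cyclic positions -/
def cyR (n : ℕ) (p q : ℕ) : Prop :=
  p % 2 = 0 ∧ (q = p + 1 ∨ p = q + 1 ∨ (p = 0 ∧ q + 1 = 2 * n))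

lemma crR_iff {n : ℕ} (x y : Fin (2 * n)) :
    crR n x y ↔ cyR n (phi n x : Fin (2 * n)) (phi n y : Fin (2 * n)) := by
  have hx := x.2
  have hy := y.2
  rw [phi_val, phi_val]
  unfold crR cyR natCrownCover
  constructor
  · rintro (⟨i, h1, h2, h3, h4⟩ | ⟨i, h1, h2, h3, h4⟩ | ⟨h3, h4⟩) <;> split_ifs <;> omega
  · rintro ⟨h0, h⟩
    split_ifs at h0 h with hx' hy' hy'
    · omega
    · rcases h with h | h | h
      · left; exact ⟨x + 1, by omega⟩
      · right; left; exact ⟨x, by omega⟩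
      · right; right; omega
    · omega
    · omega

lemma rho_phi_nat {n : ℕ} (x y : Fin (2 * n)) (h : crR n x y) :
    (rho n * phi n) x < (rho n * phi n) y := by
  rw [crR_iff] at h
  rw [Equiv.Perm.mul_apply, Equiv.Perm.mul_apply, Fin.lt_def, rho_val, rho_val]
  have hx := (phi n x).2
  have hy := (phi n y).2
  unfold cyR at h
  split_ifs <;> omega

lemma isCAP_iff {n : ℕ} (σ : Equiv.Perm (Fin (2 * n))) :
    IsCAP σ ↔ ∀ p q : Fin (2 * n), cyR n p q → σ p < σ q := by
  have hc : ∀ i : Fin (2 * n), ((cyclicSucc i : Fin (2 * n)) : ℕ) =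
      if (i : ℕ) + 1 = 2 * n then (0 : ℕ) else (i : ℕ) + 1 := by
    intro i
    have := i.2
    split_ifs with h
    · simp [cyclicSucc, h]
    · exact cs_val i (by omega)
  constructor
  · rintro h p q ⟨h0, h1⟩
    have hp := p.2
    have hq := q.2
    rcases h1 with h1 | h1 | h1
    · have e : q = cyclicSucc p := Fin.ext (by rw [hc]; split_ifs <;> omega)
      rw [e]
      exact (h p).1 (Nat.even_iff.2 h0)
    · have e : p = cyclicSucc q := Fin.ext (by rw [hc]; split_ifs <;> omega)
      rw [e]
      exact (h q).2 (Nat.odd_iff.2 (by omega))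
    · have e : p = cyclicSucc q := Fin.ext (by rw [hc]; split_ifs <;> omega)
      rw [e]
      exact (h q).2 (Nat.odd_iff.2 (by omega))
  · intro h i
    have hi := i.2
    have hci := hc i
    constructor
    · intro he
      rw [Nat.even_iff] at he
      apply h
      unfold cyR
      split_ifs at hci <;> omega
    · intro he
      rw [Nat.odd_iff] at he
      apply h
      unfold cyR
      split_ifs at hci <;> omega

lemma cap_lin {n : ℕ} (π : Equiv.Perm (Fin (2 * n))) :
    IsCAP (phi n * π)⁻¹ ↔ IsLinExtCrown π := by
  rw [isCAP_iff, linExt_iff]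
  constructor
  · intro h x y hxy
    have := h _ _ ((crR_iff x y).1 hxy)
    simpa [mul_inv_rev, Equiv.Perm.mul_apply] using this
  · intro h p q hpq
    have := h ((phi n)⁻¹ p) ((phi n)⁻¹ q) ((crR_iff _ _).2 (by simpa using hpq))
    simpa [mul_inv_rev, Equiv.Perm.mul_apply] using this

lemma cswap_eq {n : ℕ} (π : Equiv.Perm (Fin (2 * n))) (h : IsLinExtCrown π) :
    cswap (phi n * π)⁻¹ = des (rho n * phi n * π) := by
  rw [linExt_iff] at h
  unfold cswap des CSwapSet
  congr 1
  ext i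
  simp only [Set.mem_ofPred_eq, Equiv.Perm.mul_apply, inv_inv]
  refine and_congr_right fun hi => ?_
  have hc := cs_val i hi
  have hn : ¬ crR n (π (cyclicSucc i)) (π i) := by
    intro hr
    have := h _ _ hr
    simp at this
    rw [Fin.lt_def] at this
    omega
  rw [crR_iff] at hn
  have hne : ((phi n (π (cyclicSucc i)) : Fin (2 * n)) : ℕ) ≠ (phi n (π i) : Fin (2 * n)) := by
    intro he
    have := π.injective ((phi n).injective (Fin.ext he))
    rw [this] at hc
    omega
  rw [Fin.lt_def, rho_val, rho_val]
  have hx := (phi n (π (cyclicSucc i))).2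
  have hy := (phi n (π i)).2
  unfold cyR at hn
  split_ifs <;> omega

/-- Corollary 5.13: the statistic `cswap` on cyclically alternating permutations
is equidistributed with the descent statistic on linear extensions of the
naturally labeled crown poset. -/
theorem cswap_des_equidistribution (n : ℕ) (hn : 1 ≤ n) (j : ℕ) :
    {σ : Equiv.Perm (Fin (2 * n)) | IsCAP σ ∧ cswap σ = j}.ncard
      = {π : Equiv.Perm (Fin (2 * n)) | IsLinExtCrown π ∧ des π = j}.ncard := by
  have h0 := natural_indep (n := n) j (∑ i : Fin (2 * n), ((2 * n : ℤ) -
    ((rho n * phi n)⁻¹ i : Fin (2 * n))) * (i : ℕ)).toNat (rho n * phi n) rho_phi_nat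
    (Int.self_le_toNat _)
  rw [← h0]
  symm
  apply Set.ncard_congr (fun π _ => (phi n * π)⁻¹)
  · rintro π ⟨hl, hd⟩
    exact ⟨(cap_lin π).2 hl, by rw [cswap_eq π hl]; exact hd⟩
  · intro π π' _ _ he
    simpa using he
  · rintro σ ⟨hl, hd⟩
    have e : (phi n * ((phi n)⁻¹ * σ⁻¹))⁻¹ = σ := by simp
    have hl' : IsLinExtCrown ((phi n)⁻¹ * σ⁻¹) := by
      rw [← cap_lin, e]; exact hl
    exact ⟨(phi n)⁻¹ * σ⁻¹, ⟨hl', by rw [← cswap_eq _ hl', e]; exact hd⟩, e⟩
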